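/- arXiv:2403.03827 — 3 statements merged into one kernel-verified Lean document; each statement's English description precedes it below -/
import Mathlib

section
/- Let f : ℝⁿ → ℝ, let τ > 0, and let r : ℝⁿ → ℝ be separable, r(x) = Σᵢ rᵢ(xᵢ), where each rᵢ : ℝ → ℝ is convex, satisfies rᵢ(0) = 0, and rᵢ(t) ≥ 0 for all t ≥ 0. Define g(y,z) = f(y − z) + τ·Σᵢ(yᵢ + zᵢ) + r(y) + r(−z). If (y*, z*) minimizes g over the set {(y,z) : y ≥ 0, z ≥ 0}, then yᵢ* zᵢ* = 0 for every i = 1,…,n. -/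
/-!
Compare the minimizer `(y, z)` with `(w⁺, w⁻)`, where `w = y - z`. The argument of `f` is unchanged,
and `∑ i, (y i + z i)` drops by `2 * ∑ i, min (y i) (z i)`. The values of `r` do not increase in
total: `(w i)⁺` and `-(w i)⁻` lie between `-z i` and `y i` and have the same sum as these, so the
convexity of `r i` applies. Minimality therefore forces `min (y i) (z i) = 0` for every `i`.
-/

section Convexity

theorem smul_add_smul_add_smul_add_smul_swap {𝕜 M : Type*} [Semiring 𝕜] [AddCommMonoid M]
    [Module 𝕜 M] {a b : 𝕜} (hab : a + b = 1) (x y : M) :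
    (a • x + b • y) + (b • x + a • y) = x + y := by
  rw [add_add_add_comm, ← add_smul, ← add_smul, add_comm b a, hab, one_smul, one_smul]

theorem convexOn_add_le_add_of_mem_segment {𝕜 E β : Type*} [Semiring 𝕜] [PartialOrder 𝕜]
    [AddCommGroup E] [Module 𝕜 E] [AddCommMonoid β] [PartialOrder β] [IsOrderedAddMonoid β]
    [Module 𝕜 β] {s : Set E} {φ : E → β} (hφ : ConvexOn 𝕜 s φ) {x y u v : E}
    (hx : x ∈ s) (hy : y ∈ s) (hu : u ∈ segment 𝕜 x y) (huv : u + v = x + y) :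
    φ u + φ v ≤ φ x + φ y := by
  obtain ⟨a, b, ha, hb, hab, rfl⟩ := hu
  obtain rfl : v = b • x + a • y :=
    add_left_cancel (huv.trans (smul_add_smul_add_smul_add_smul_swap hab x y).symm)
  calc φ (a • x + b • y) + φ (b • x + a • y)
      ≤ (a • φ x + b • φ y) + (b • φ x + a • φ y) :=
        add_le_add (hφ.2 hx hy ha hb hab) (hφ.2 hx hy hb ha (by rwa [add_comm]))
    _ = φ x + φ y := smul_add_smul_add_smul_add_smul_swap hab (φ x) (φ y)

end Convexity

section PosPart

theorem posPart_sub_mem_Icc_neg {G : Type*} [Lattice G] [AddCommGroup G] [IsOrderedAddMonoid G]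
    {a b : G} (ha : 0 ≤ a) (hb : 0 ≤ b) : (a - b)⁺ ∈ Set.Icc (-b) a :=
  ⟨(neg_nonpos.2 hb).trans (posPart_nonneg _), sup_le (sub_le_self a hb) ha⟩

theorem posPart_sub_add_negPart_sub_add_two_nsmul_inf {G : Type*} [Lattice G] [AddCommGroup G]
    [IsOrderedAddMonoid G] (a b : G) : (a - b)⁺ + (a - b)⁻ + 2 • (a ⊓ b) = a + b := by
  rw [posPart_add_negPart, two_nsmul_inf_eq_add_sub_abs_sub, abs_sub_comm, add_sub_cancel]

theorem convexOn_posPart_sub_add_neg_negPart_sub_le {𝕜 β : Type*} [Field 𝕜] [LinearOrder 𝕜]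
    [IsStrictOrderedRing 𝕜] [AddCommMonoid β] [PartialOrder β] [IsOrderedAddMonoid β]
    [Module 𝕜 β] {φ : 𝕜 → β} (hφ : ConvexOn 𝕜 Set.univ φ) {a b : 𝕜} (ha : 0 ≤ a) (hb : 0 ≤ b) :
    φ (a - b)⁺ + φ (-(a - b)⁻) ≤ φ a + φ (-b) := by
  have hseg : (a - b)⁺ ∈ segment 𝕜 a (-b) := by
    rw [segment_symm, segment_eq_Icc ((neg_nonpos.2 hb).trans ha)]
    exact posPart_sub_mem_Icc_neg ha hb
  have hsum : (a - b)⁺ + -(a - b)⁻ = a + -b := by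
    rw [← sub_eq_add_neg, posPart_sub_negPart, sub_eq_add_neg]
  exact convexOn_add_le_add_of_mem_segment hφ (Set.mem_univ _) (Set.mem_univ _) hseg hsum

end PosPart

section SplitObjective

/-- The paper's `g`: the objective obtained from `x ↦ f x + τ * ‖x‖₁ + ∑ i, r i (x i)` by splitting
the variable as `x = y - z` with `y, z ≥ 0`, the regularizer being applied to `y` and `-z`
separately. The sign constraints are not built in. -/
def splitObjective {R ι : Type*} [Ring R] [Fintype ι] (f : (ι → R) → R) (τ : R) (r : ι → R → R)
    (y z : ι → R) : R :=
  f (y - z) + τ * (∑ i, (y i + z i)) + (∑ i, r i (y i)) + (∑ i, r i (-(z i)))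

variable {𝕜 ι : Type*} [Field 𝕜] [LinearOrder 𝕜] [IsStrictOrderedRing 𝕜] [Fintype ι]

theorem splitObjective_posPart_negPart_add_le (f : (ι → 𝕜) → 𝕜) (τ : 𝕜) {r : ι → 𝕜 → 𝕜}
    (hr : ∀ i, ConvexOn 𝕜 Set.univ (r i)) {y z : ι → 𝕜} (hy : 0 ≤ y) (hz : 0 ≤ z) :
    splitObjective f τ r (y - z)⁺ (y - z)⁻ + 2 * τ * ∑ i, min (y i) (z i) ≤
      splitObjective f τ r y z := by
  have hlinear : ∑ i, ((y - z)⁺ i + (y - z)⁻ i) + 2 * ∑ i, min (y i) (z i) =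
      ∑ i, (y i + z i) := by
    rw [two_mul, ← two_nsmul, ← Finset.sum_nsmul, ← Finset.sum_add_distrib]
    exact Finset.sum_congr rfl fun i _ ↦
      posPart_sub_add_negPart_sub_add_two_nsmul_inf (y i) (z i)
  have hconvex : ∑ i, r i ((y - z)⁺ i) + ∑ i, r i (-(y - z)⁻ i) ≤
      ∑ i, r i (y i) + ∑ i, r i (-z i) := by
    rw [← Finset.sum_add_distrib, ← Finset.sum_add_distrib]
    exact Finset.sum_le_sum fun i _ ↦
      convexOn_posPart_sub_add_neg_negPart_sub_le (hr i) (hy i) (hz i)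
  simp only [splitObjective, posPart_sub_negPart, ← hlinear]
  linarith

theorem stmt_0_general (f : (ι → 𝕜) → 𝕜) {τ : 𝕜} (hτ : 0 < τ) {r : ι → 𝕜 → 𝕜}
    (hr : ∀ i, ConvexOn 𝕜 Set.univ (r i)) {y z : ι → 𝕜} (hy : 0 ≤ y) (hz : 0 ≤ z)
    (hmin : ∀ y' z' : ι → 𝕜, 0 ≤ y' → 0 ≤ z' →
      splitObjective f τ r y z ≤ splitObjective f τ r y' z') (i : ι) :
    y i * z i = 0 := by
  have hmin_nonneg (j : ι) : 0 ≤ min (y j) (z j) := le_min (hy j) (hz j)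
  have hsum_nonpos : ∑ j, min (y j) (z j) ≤ 0 := by
    have hdecrease := splitObjective_posPart_negPart_add_le f τ hr hy hz
    have hle := hmin _ _ (posPart_nonneg (y - z)) (negPart_nonneg (y - z))
    exact nonpos_of_mul_nonpos_right (by linarith) (mul_pos two_pos hτ)
  have hle_sum : min (y i) (z i) ≤ ∑ j, min (y j) (z j) :=
    Finset.single_le_sum (fun j _ ↦ hmin_nonneg j) (Finset.mem_univ i)
  have hmin_eq_zero : min (y i) (z i) = 0 :=
    (hle_sum.trans hsum_nonpos).antisymm (hmin_nonneg i)
  rw [← min_mul_max, hmin_eq_zero, zero_mul]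

end SplitObjective

/-- Lemma 1 (complementarity part): if `(y*, z*)` minimizes
`g(y,z) = f(y-z) + τ·Σᵢ(yᵢ+zᵢ) + r(y) + r(-z)` over `{(y,z) : y ≥ 0, z ≥ 0}`,
where `r(x) = Σᵢ rᵢ(xᵢ)` with each `rᵢ` convex, `rᵢ(0) = 0`, `rᵢ(t) ≥ 0` for `t ≥ 0`,
then `yᵢ* zᵢ* = 0` for all `i`. -/
theorem stmt_0 (n : ℕ) (f : (Fin n → ℝ) → ℝ) (τ : ℝ) (hτ : 0 < τ)
    (r : Fin n → ℝ → ℝ)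
    (hconv : ∀ i, ConvexOn ℝ Set.univ (r i))
    (hzero : ∀ i, r i 0 = 0)
    (hnonneg : ∀ i (t : ℝ), 0 ≤ t → 0 ≤ r i t)
    (g : (Fin n → ℝ) → (Fin n → ℝ) → ℝ)
    (hg : ∀ y z, g y z =
      f (y - z) + τ * (∑ i, (y i + z i)) + (∑ i, r i (y i)) + (∑ i, r i (-(z i))))
    (ystar zstar : Fin n → ℝ)
    (hy : ∀ i, 0 ≤ ystar i) (hz : ∀ i, 0 ≤ zstar i)
    (hmin : ∀ y z : Fin n → ℝ, (∀ i, 0 ≤ y i) → (∀ i, 0 ≤ z i) →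
      g ystar zstar ≤ g y z) :
    ∀ i, ystar i * zstar i = 0 := by
  obtain rfl : g = splitObjective f τ r := funext₂ hg
  exact stmt_0_general f hτ hconv hy hz hmin
end

section
/- Let f : ℝⁿ → ℝ, let ε > 0, and let r : ℝⁿ → ℝ be convex, symmetric with respect to each variable, i.e., r(x − 2xᵢeᵢ) = r(x) for all x ∈ ℝⁿ and all i, and increasing on the positive orthant, i.e., r(x₀ + γeᵢ) ≥ r(x₀) for all x₀ ∈ ℝⁿ with x₀ ≥ 0, all γ ≥ 0, and all i. Define g(y,z) = f(y − z) + r(y + z) + ε·Σᵢ(yᵢ + zᵢ). If (y*, z*) minimizes g over the set {(y,z) : y ≥ 0, z ≥ 0}, then x* := y* − z* minimizes f(x) + r(x) + ε‖x‖₁ over all x ∈ ℝⁿ. -/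
/-!
With `h a = r a + ε ∑ᵢ aᵢ`, coordinatewise symmetry of `r` gives `h |x| = r x + ε ‖x‖₁`, and `h` is
monotone on the positive orthant. For `y, z ≥ 0` we have `|y - z| ≤ y + z`, so passing from
`(y, z)` to `x = y - z` does not increase the objective; conversely `x` is split as `x⁺ - x⁻`
with `x⁺ + x⁻ = |x|`, which loses nothing.
-/

open Function Set

section SplitVariables

variable {E β : Type*} [AddCommGroup E] [Lattice E] [IsOrderedAddMonoid E]

theorem abs_sub_le_add_of_nonneg {y z : E} (hy : 0 ≤ y) (hz : 0 ≤ z) : |y - z| ≤ y + z :=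
  calc |y - z|
      = |y + -z| := by rw [sub_eq_add_neg]
    _ ≤ |y| + |-z| := abs_add_le y (-z)
    _ = y + z := by rw [abs_neg, abs_of_nonneg hy, abs_of_nonneg hz]

theorem isMinOn_sub_of_isMinOn_split [Add β] [Preorder β] [AddLeftMono β] {f h : E → β}
    (hh : MonotoneOn h (Ici 0)) {y z : E} (hy : 0 ≤ y) (hz : 0 ≤ z)
    (hmin : IsMinOn (fun p : E × E ↦ f (p.1 - p.2) + h (p.1 + p.2)) (Ici 0) (y, z)) :
    IsMinOn (fun x ↦ f x + h |x|) univ (y - z) := fun x _ ↦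
  calc f (y - z) + h |y - z|
      ≤ f (y - z) + h (y + z) := by
        gcongr
        exact hh (abs_nonneg _) (add_nonneg hy hz) (abs_sub_le_add_of_nonneg hy hz)
    _ ≤ f (x⁺ - x⁻) + h (x⁺ + x⁻) :=
        hmin (show (x⁺, x⁻) ∈ Ici (0 : E × E) from ⟨posPart_nonneg x, negPart_nonneg x⟩)
    _ = f x + h |x| := by rw [posPart_sub_negPart, posPart_add_negPart]

end SplitVariables

section Coordinatewise

variable {ι β : Type*} [DecidableEq ι]

theorem update_eq_add_smul_single {R : Type*} [Ring R] (x : ι → R) (i : ι) (t : R) :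
    update x i t = x + (t - x i) • Pi.single i 1 := by
  ext j
  obtain rfl | hj := eq_or_ne j i <;> simp [*]

variable [Finite ι]

theorem monotoneOn_of_le_update {α : ι → Type*} [∀ i, Preorder (α i)] [Preorder β]
    {r : (∀ i, α i) → β} {s : Set (∀ i, α i)} [s.OrdConnected]
    (hr : ∀ a ∈ s, ∀ i, ∀ t, a i ≤ t → update a i t ∈ s → r a ≤ r (update a i t)) :
    MonotoneOn r s := by
  intro a ha b hb hab
  cases nonempty_fintype ι
  have piecewise_mem (t : Finset ι) : t.piecewise b a ∈ s :=
    OrdConnected.out ‹_› ha hb (t.piecewise_mem_Icc' hab)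
  have le_piecewise (t : Finset ι) : r a ≤ r (t.piecewise b a) := by
    induction t using Finset.induction_on with
    | empty => rw [Finset.piecewise_empty]
    | insert i t hi ih =>
      have hai : t.piecewise b a i ≤ b i := by
        rw [t.piecewise_eq_of_notMem _ _ hi]
        exact hab i
      have hmem := piecewise_mem (insert i t)
      rw [Finset.piecewise_insert] at hmem ⊢
      exact ih.trans (hr _ (piecewise_mem t) i (b i) hai hmem)
  simpa only [Finset.piecewise_univ] using le_piecewise Finset.univ

theorem apply_abs_of_apply_update_neg {α : Type*} [AddCommGroup α] [LinearOrder α]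
    {r : (ι → α) → β} (hr : ∀ x i, r (update x i (-x i)) = r x) (x : ι → α) : r |x| = r x := by
  cases nonempty_fintype ι
  have apply_piecewise (s : Finset ι) : r (s.piecewise |x| x) = r x := by
    induction s using Finset.induction_on with
    | empty => rw [Finset.piecewise_empty]
    | insert i s hi ih =>
      have hxi : s.piecewise |x| x i = x i := s.piecewise_eq_of_notMem _ _ hi
      rw [Finset.piecewise_insert, Pi.abs_apply, ← ih]
      rcases abs_choice (x i) with habs | habs
      · rw [habs, ← hxi, update_eq_self]
      · rw [habs, ← hxi, hr]
  simpa only [Finset.piecewise_univ] using apply_piecewise Finset.univ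

end Coordinatewise

theorem stmt_6_general {ι R : Type*} [Fintype ι] [DecidableEq ι]
    [Ring R] [LinearOrder R] [IsOrderedRing R] (f r : (ι → R) → R) {ε : R} (hε : 0 ≤ ε)
    (hsymm : ∀ (x : ι → R) (i : ι), r (x - (2 * x i) • (Pi.single i 1 : ι → R)) = r x)
    (hincr : ∀ x₀ : ι → R, 0 ≤ x₀ → ∀ γ : R, 0 ≤ γ →
      ∀ i : ι, r x₀ ≤ r (x₀ + γ • (Pi.single i 1 : ι → R)))
    {y z : ι → R} (hy : 0 ≤ y) (hz : 0 ≤ z)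
    (hmin : IsMinOn (fun p : (ι → R) × (ι → R) ↦
      f (p.1 - p.2) + r (p.1 + p.2) + ε * ∑ i, (p.1 i + p.2 i)) (Ici 0) (y, z)) :
    IsMinOn (fun x ↦ f x + r x + ε * ∑ i, |x i|) univ (y - z) := by
  have r_abs : ∀ x, r |x| = r x := apply_abs_of_apply_update_neg fun x i ↦ by
    rw [← hsymm x i, update_eq_add_smul_single, ← neg_add', ← two_mul, neg_smul, sub_eq_add_neg]
  have r_mono : MonotoneOn r (Ici 0) := monotoneOn_of_le_update fun a ha i t hat _ ↦ by
    rw [update_eq_add_smul_single]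
    exact hincr a ha _ (sub_nonneg.2 hat) i
  have penalty_mono : MonotoneOn (fun a : ι → R ↦ r a + ε * ∑ i, a i) (Ici 0) :=
    r_mono.add fun a _ b _ hab ↦
      mul_le_mul_of_nonneg_left (Finset.sum_le_sum fun i _ ↦ hab i) hε
  simp only [add_assoc] at hmin ⊢
  simpa only [r_abs, Pi.abs_apply] using isMinOn_sub_of_isMinOn_split penalty_mono hy hz hmin

/-- Lemma 2 (minimization part): let `r : ℝⁿ → ℝ` be convex, symmetric with
respect to each variable (`r(x - 2xᵢeᵢ) = r(x)`), and increasing on the positive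
orthant (`r(x₀ + γeᵢ) ≥ r(x₀)` for `x₀ ≥ 0`, `γ ≥ 0`). If `(y*, z*)` minimizes
`g(y,z) = f(y-z) + r(y+z) + ε·Σᵢ(yᵢ+zᵢ)` over `{(y,z) : y ≥ 0, z ≥ 0}`,
then `x* := y* - z*` minimizes `f(x) + r(x) + ε‖x‖₁` over `ℝⁿ`. -/
theorem stmt_6 (n : ℕ) (f : (Fin n → ℝ) → ℝ) (ε : ℝ) (hε : 0 < ε)
    (r : (Fin n → ℝ) → ℝ)
    (hconv : ConvexOn ℝ Set.univ r)
    (hsymm : ∀ (x : Fin n → ℝ) (i : Fin n),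
      r (x - (2 * x i) • (Pi.single i 1 : Fin n → ℝ)) = r x)
    (hincr : ∀ (x₀ : Fin n → ℝ), (∀ j, 0 ≤ x₀ j) → ∀ (γ : ℝ), 0 ≤ γ →
      ∀ (i : Fin n), r x₀ ≤ r (x₀ + γ • (Pi.single i 1 : Fin n → ℝ)))
    (g : (Fin n → ℝ) → (Fin n → ℝ) → ℝ)
    (hg : ∀ y z, g y z = f (y - z) + r (y + z) + ε * (∑ i, (y i + z i)))
    (ystar zstar : Fin n → ℝ)
    (hy : ∀ i, 0 ≤ ystar i) (hz : ∀ i, 0 ≤ zstar i)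
    (hmin : ∀ y z : Fin n → ℝ, (∀ i, 0 ≤ y i) → (∀ i, 0 ≤ z i) →
      g ystar zstar ≤ g y z) :
    ∀ x : Fin n → ℝ,
      f (ystar - zstar) + r (ystar - zstar) + ε * (∑ i, |ystar i - zstar i|) ≤
      f x + r x + ε * (∑ i, |x i|) := by
  simp only [hg] at hmin
  exact fun x ↦ stmt_6_general f r hε.le hsymm hincr hy hz
    (fun p hp ↦ hmin p.1 p.2 hp.1 hp.2) (mem_univ x)
end

section
/- Let f : ℝⁿ → ℝ, let τ > 0, and let I ⊆ {1,…,n} be a set of indices with complement I^c. Consider the split problem in the variables (w, y_I, z_I), where w ∈ ℝ^{I^c} collects the components of x with indices outside I and y_I, z_I ∈ ℝ^{I} with y_I, z_I ≥ 0: minimize f(x(w, y_I − z_I)) + τ·Σ_{i∈I}((y_I)ᵢ + (z_I)ᵢ), where x(w, v) ∈ ℝⁿ denotes the vector whose components on I^c equal w and whose components on I equal v. If (w*, y_I*, z_I*) is a minimizer of this split problem, then (y_I*)ᵢ (z_I*)ᵢ = 0 for every i ∈ I, and the vector x* := x(w*, y_I* − z_I*) minimizes f(x) + τ·Σ_{i∈I}|xᵢ|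 over all x ∈ ℝⁿ. -/
/-!
Every `v` splits as `v⁺ - v⁻` at cost `∑ (v⁺ + v⁻) = ∑ |v|`, so the split optimum is at most the
`ℓ₁`-penalized value at every point. Compared with the point `y - z` of a split minimizer itself,
this gives `∑ (y + z) ≤ ∑ |y - z|`, while the opposite inequality holds for all `y, z ≥ 0`.
Hence the two penalties agree at the minimizer, and termwise `|yᵢ - zᵢ| = yᵢ + zᵢ` forces
`yᵢ * zᵢ = 0`.
-/

theorem abs_sub_le_add_of_nonneg_s16 {G : Type*} [AddCommGroup G] [LinearOrder G]
    [IsOrderedAddMonoid G] {a b : G} (ha : 0 ≤ a) (hb : 0 ≤ b) : |a - b| ≤ a + b := by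
  simpa only [abs_of_nonneg ha, abs_of_nonneg hb] using abs_sub a b

theorem mul_eq_zero_of_abs_sub_eq_add {R : Type*} [Ring R] [LinearOrder R]
    [IsStrictOrderedRing R] {a b : R} (h : |a - b| = a + b) : a * b = 0 := by
  rcases eq_or_eq_neg_of_abs_eq h with hab | hab
  · rw [sub_eq_add_neg, add_right_inj, neg_eq_self] at hab
    rw [hab, mul_zero]
  · rw [neg_add', sub_left_inj, self_eq_neg] at hab
    rw [hab, zero_mul]

/-- `(w, y, z)` minimizes the split problem `g w (y - z) + τ * ∑ i, (y i + z i)` over `y, z ≥ 0`.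
The unpenalized variable `w` ranges over an arbitrary type. -/
structure IsL1SplitMinimizer {W κ R : Type*} [Fintype κ] [Ring R] [Preorder R]
    (g : W → (κ → R) → R) (τ : R) (w : W) (y z : κ → R) : Prop where
  nonneg_left : ∀ i, 0 ≤ y i
  nonneg_right : ∀ i, 0 ≤ z i
  le_split : ∀ (w' : W) (y' z' : κ → R), (∀ i, 0 ≤ y' i) → (∀ i, 0 ≤ z' i) →
    g w (y - z) + τ * ∑ i, (y i + z i) ≤ g w' (y' - z') + τ * ∑ i, (y' i + z' i)

namespace IsL1SplitMinimizer

variable {W κ R : Type*} [Fintype κ] [Ring R] [LinearOrder R] [IsStrictOrderedRing R]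
  {g : W → (κ → R) → R} {τ : R} {w : W} {y z : κ → R}

theorem split_le_penalized (h : IsL1SplitMinimizer g τ w y z) (w' : W) (v : κ → R) :
    g w (y - z) + τ * ∑ i, (y i + z i) ≤ g w' v + τ * ∑ i, |v i| := by
  simpa only [posPart_sub_negPart, Pi.posPart_apply, Pi.negPart_apply, posPart_add_negPart] using
    h.le_split w' v⁺ v⁻ (posPart_nonneg v) (negPart_nonneg v)

theorem sum_abs_sub_eq_sum_add (h : IsL1SplitMinimizer g τ w y z) (hτ : 0 < τ) :
    ∑ i, |y i - z i| = ∑ i, (y i + z i) := by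
  apply le_antisymm
  · exact Finset.sum_le_sum fun i _ =>
      abs_sub_le_add_of_nonneg_s16 (h.nonneg_left i) (h.nonneg_right i)
  · have penalty_le : τ * ∑ i, (y i + z i) ≤ τ * ∑ i, |y i - z i| :=
      le_of_add_le_add_left (h.split_le_penalized w (y - z))
    exact le_of_mul_le_mul_left penalty_le hτ

theorem mul_eq_zero (h : IsL1SplitMinimizer g τ w y z) (hτ : 0 < τ) (i : κ) : y i * z i = 0 := by
  have abs_sub_eq_add : ∀ j ∈ Finset.univ, |y j - z j| = y j + z j :=
    (Finset.sum_eq_sum_iff_of_le fun j _ =>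
      abs_sub_le_add_of_nonneg_s16 (h.nonneg_left j) (h.nonneg_right j)).mp
      (h.sum_abs_sub_eq_sum_add hτ)
  exact mul_eq_zero_of_abs_sub_eq_add (abs_sub_eq_add i (Finset.mem_univ i))

theorem penalized_le (h : IsL1SplitMinimizer g τ w y z) (hτ : 0 < τ) (w' : W) (v : κ → R) :
    g w (y - z) + τ * ∑ i, |(y - z) i| ≤ g w' v + τ * ∑ i, |v i| := by
  simpa only [Pi.sub_apply, h.sum_abs_sub_eq_sum_add hτ] using h.split_le_penalized w' v

end IsL1SplitMinimizer

theorem stmt_16_general {ι R : Type*} [Ring R] [LinearOrder R] [IsStrictOrderedRing R]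
    (f : (ι → R) → R) {τ : R} (hτ : 0 < τ) (I : Finset ι) [DecidablePred (· ∈ I)]
    (X : ({i : ι // i ∉ I} → R) → ({i : ι // i ∈ I} → R) → (ι → R))
    (hX : ∀ w v (j : ι), X w v j = if h : j ∈ I then v ⟨j, h⟩ else w ⟨j, h⟩)
    {w : {i : ι // i ∉ I} → R} {y z : {i : ι // i ∈ I} → R}
    (hmin : IsL1SplitMinimizer (fun w v => f (X w v)) τ w y z) :
    (∀ i, y i * z i = 0) ∧
    (∀ x : ι → R,
      f (X w (y - z)) + τ * (∑ i ∈ I, |X w (y - z) i|) ≤ f x + τ * (∑ i ∈ I, |x i|)) := by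
  refine ⟨hmin.mul_eq_zero hτ, fun x => ?_⟩
  have X_restrict : X (fun j => x j) (fun j => x j) = x := by
    funext j
    simp only [hX, dite_eq_ite, ite_self]
  have X_apply_mem (i : {i : ι // i ∈ I}) : X w (y - z) i = (y - z) i := by
    rw [hX, dif_pos i.2]
  have penalized_le := hmin.penalized_le hτ (fun j => x j) (fun j => x j)
  rw [X_restrict] at penalized_le
  simpa only [← Finset.sum_coe_sort I, X_apply_mem] using penalized_le

/-- Partial-splitting extension of Lemma 1: only the subvector `x_I` enters the
`ℓ₁`-term. Writing `X w v ∈ ℝⁿ` for the vector whose components on `Iᶜ` equal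
`w` and whose components on `I` equal `v`, if `(w*, y_I*, z_I*)` minimizes
`f(X(w, y_I - z_I)) + τ·Σ_{i∈I}((y_I)ᵢ + (z_I)ᵢ)` over `y_I, z_I ≥ 0`, then
`(y_I*)ᵢ (z_I*)ᵢ = 0` for all `i ∈ I` and `x* := X(w*, y_I* - z_I*)` minimizes
`f(x) + τ·Σ_{i∈I}|xᵢ|` over `ℝⁿ`. -/
theorem stmt_16 (n : ℕ) (f : (Fin n → ℝ) → ℝ) (τ : ℝ) (hτ : 0 < τ)
    (I : Finset (Fin n))
    (X : ({i : Fin n // i ∉ I} → ℝ) → ({i : Fin n // i ∈ I} → ℝ) → (Fin n → ℝ))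
    (hX : ∀ w v (j : Fin n),
      X w v j = if h : j ∈ I then v ⟨j, h⟩ else w ⟨j, h⟩)
    (wstar : {i : Fin n // i ∉ I} → ℝ) (ystar zstar : {i : Fin n // i ∈ I} → ℝ)
    (hy : ∀ i, 0 ≤ ystar i) (hz : ∀ i, 0 ≤ zstar i)
    (hmin : ∀ (w : {i : Fin n // i ∉ I} → ℝ) (y z : {i : Fin n // i ∈ I} → ℝ),
      (∀ i, 0 ≤ y i) → (∀ i, 0 ≤ z i) →
      f (X wstar (ystar - zstar)) + τ * (∑ i, (ystar i + zstar i)) ≤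
      f (X w (y - z)) + τ * (∑ i, (y i + z i))) :
    (∀ i, ystar i * zstar i = 0) ∧
    (∀ x : Fin n → ℝ,
      f (X wstar (ystar - zstar)) + τ * (∑ i ∈ I, |X wstar (ystar - zstar) i|) ≤
      f x + τ * (∑ i ∈ I, |x i|)) :=
  stmt_16_general f hτ I X hX ⟨hy, hz, hmin⟩
end
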